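/- Fix a constant ε > 0. There exist constants c > 0, c' > 0 and a threshold n₀ (all depending only on ε) such that the following holds for all integers n ≥ n₀, all m with (1+ε)·n ≤ m, and every integer N > (log n)⁶. Let v₁, …, v_N be vertices chosen independently and uniformly at random (with replacement) from the 2m vertices of the random cuckoo graph with n edges on parts of size m, the choice being independent of the hash functions. Then Pr(∑_{i=1}^{N} C(v_i) > c·N) ≤ n^{−c'·log n}, where the probability is over both the choice of the vertices v_i and the choice of the hash functions. -/

import Mathlib

open Classical

/-- Adjacency: item `x` gives an edge from left vertex `h₀ x` to right vertex `h₁ x`. -/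
def cuckooAdj (n m : ℕ) (h₀ h₁ : Fin n → Fin m) (a b : Fin m ⊕ Fin m) : Prop :=
  ∃ x : Fin n, a = Sum.inl (h₀ x) ∧ b = Sum.inr (h₁ x)

/-- Connectivity in the cuckoo graph: equivalence generated by adjacency. -/
def cuckooConn (n m : ℕ) (h₀ h₁ : Fin n → Fin m) : (Fin m ⊕ Fin m) → (Fin m ⊕ Fin m) → Prop :=
  Relation.EqvGen (cuckooAdj n m h₀ h₁)

/-- `C(v)`: number of edges (items, with multiplicity) in the component of `v`. -/
noncomputable def cuckooC (n m : ℕ) (h₀ h₁ : Fin n → Fin m) (v : Fin m ⊕ Fin m) : ℕ :=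
  Nat.card {x : Fin n // cuckooConn n m h₀ h₁ (Sum.inl (h₀ x)) v}

/-- `V(v)`: number of vertices in the component of `v`. -/
noncomputable def cuckooV (n m : ℕ) (h₀ h₁ : Fin n → Fin m) (v : Fin m ⊕ Fin m) : ℕ :=
  Nat.card {u : Fin m ⊕ Fin m // cuckooConn n m h₀ h₁ u v}

/-- `B_v`: cyclotomic number of the component of `v`, `C(v) − V(v) + 1`. -/
noncomputable def cuckooB (n m : ℕ) (h₀ h₁ : Fin n → Fin m) (v : Fin m ⊕ Fin m) : ℕ :=
  cuckooC n m h₀ h₁ v + 1 - cuckooV n m h₀ h₁ v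

/-- The sample space: a pair of hash functions chosen uniformly at random. -/
abbrev HashPair (n m : ℕ) := (Fin n → Fin m) × (Fin n → Fin m)

/-- Probability of an event under uniformly random hash functions. -/
noncomputable def cuckooPr (n m : ℕ) (E : HashPair n m → Prop) : ℝ :=
  (Nat.card {ω : HashPair n m // E ω} : ℝ) / (Nat.card (HashPair n m) : ℝ)

/-- Expectation of a real random variable under uniformly random hash functions. -/
noncomputable def cuckooE (n m : ℕ) (f : HashPair n m → ℝ) : ℝ :=
  (∑ ω : HashPair n m, f ω) / (Nat.card (HashPair n m) : ℝ)

/-- `X_i`: number of vertices lying in components with exactly `i` edges. -/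
noncomputable def cuckooX (n m : ℕ) (h₀ h₁ : Fin n → Fin m) (i : ℕ) : ℕ :=
  Nat.card {v : Fin m ⊕ Fin m // cuckooC n m h₀ h₁ v = i}

/-- The setoid of connected components. -/
def cuckooSetoid (n m : ℕ) (h₀ h₁ : Fin n → Fin m) : Setoid (Fin m ⊕ Fin m) :=
  ⟨cuckooConn n m h₀ h₁, Relation.EqvGen.is_equivalence _⟩

/-- `ē(G) = ∑_H max(e(H),0)`, the total excess over all components
(`ℕ`-subtraction realizes the `max` with `0`). -/
noncomputable def cuckooEbar (n m : ℕ) (h₀ h₁ : Fin n → Fin m) : ℕ :=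
  ∑ᶠ c : Quotient (cuckooSetoid n m h₀ h₁),
    (Nat.card {x : Fin n // Quotient.mk (cuckooSetoid n m h₀ h₁) (Sum.inl (h₀ x)) = c}
      - Nat.card {u : Fin m ⊕ Fin m // Quotient.mk (cuckooSetoid n m h₀ h₁) u = c})

/-- Probability over both the random hash functions and `N` uniformly random vertices
(chosen with replacement, independently of the hash functions). -/
noncomputable def cuckooPr2 (n m N : ℕ)
    (E : HashPair n m × (Fin N → Fin m ⊕ Fin m) → Prop) : ℝ :=
  (Nat.card {ω : HashPair n m × (Fin N → Fin m ⊕ Fin m) // E ω} : ℝ) /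
    (Nat.card (HashPair n m × (Fin N → Fin m ⊕ Fin m)) : ℝ)

/-!
Method of moments, of order `j ≈ log² n`. Expanding `S ^ (j + 1) = ∑ i, C(v_i) * S ^ j` for the sum
`S` of the component sizes, bound the moments of `S` inductively, conditionally on any event that
only reveals some chosen vertices and the hash values of some items. An item in the component of
`v_i` is reached by a trail of unrevealed items from `v_i` or from the revealed part of the graph.
Revealing a trail of length `l` costs probability `m⁻ˡ`, while there are at most `nˡ` trails, so the
expected number of trails is bounded by a geometric series of ratio `n / m ≤ 1 / (1 + ε)`. If `v_i`
is unrevealed, then either its own trails account for its component, or a trail links it to the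
revealed part, which costs a further factor `1 / (2 * m)`.

With `s` revealed positions, the number of starting points of trails contributes factors `s`, up to
two in each step. A conditional bound `K * z ^ s` absorbs them through `s ≤ y * (1 + 1 / y) ^ s`
with `y = log³ n`: each order multiplies `z` by `(1 + 1 / y) ^ 2`, so `z` stays bounded up to order
`log² n`, and the products `y²` are compensated by `N > log⁶ n` and by `m`.
Thus the `j`-th moment is at most `(D * N) ^ j`, and Markov's inequality for `S ^ j` at `e * D * N`
gives `e ^ (-j)`.
-/

namespace Cuckoo

open scoped Finset

section Counting

theorem card_filter_length_eq_le {α : Type*} [Fintype α] (𝓛 : Finset (List α)) (l : ℕ) :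
    #{es ∈ 𝓛 | es.length = l} ≤ Fintype.card α ^ l := by
  rw [← card_vector, ← Finset.card_univ,
    ← Finset.card_map ⟨List.Vector.toList (n := l), List.Vector.toList_injective⟩]
  refine Finset.card_le_card fun es hes => ?_
  exact Finset.mem_map.2 ⟨⟨es, (Finset.mem_filter.1 hes).2⟩, Finset.mem_univ _, rfl⟩

theorem sum_pow_length_le {α : Type*} [Fintype α] (𝓛 : Finset (List α)) {x : ℝ} (hx : 0 ≤ x)
    (hx1 : Fintype.card α * x < 1) :
    ∑ es ∈ 𝓛, x ^ es.length ≤ (1 - Fintype.card α * x)⁻¹ := by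
  have hr : 0 ≤ Fintype.card α * x := by positivity
  calc ∑ es ∈ 𝓛, x ^ es.length
      = ∑ l ∈ 𝓛.image List.length, ∑ es ∈ 𝓛 with es.length = l, x ^ es.length :=
        (Finset.sum_fiberwise_of_maps_to (fun _ => Finset.mem_image_of_mem _) _).symm
    _ = ∑ l ∈ 𝓛.image List.length, #{es ∈ 𝓛 | es.length = l} * x ^ l := by
        refine Finset.sum_congr rfl fun l _ => ?_
        rw [← nsmul_eq_mul, ← Finset.sum_const]
        exact Finset.sum_congr rfl fun es hes => by rw [(Finset.mem_filter.1 hes).2]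
    _ ≤ ∑ l ∈ 𝓛.image List.length, (Fintype.card α * x) ^ l := by
        refine Finset.sum_le_sum fun l _ => ?_
        rw [mul_pow]
        gcongr
        exact_mod_cast card_filter_length_eq_le 𝓛 l
    _ ≤ ∑' l, (Fintype.card α * x) ^ l :=
        (summable_geometric_of_lt_one hr hx1).sum_le_tsum _ fun l _ => pow_nonneg hr l
    _ = (1 - Fintype.card α * x)⁻¹ := tsum_geometric_of_lt_one hr hx1

theorem card_filter_lt_mul_pow_le_sum_pow {Ω : Type*} [Fintype Ω] {f : Ω → ℝ} (hf : ∀ ω, 0 ≤ f ω)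
    {a : ℝ} (ha : 0 ≤ a) (j : ℕ) :
    #{ω | a < f ω} * a ^ j ≤ ∑ ω, f ω ^ j := by
  rw [← nsmul_eq_mul]
  refine (Finset.card_nsmul_le_sum _ (fun ω => f ω ^ j) _ fun ω hω => ?_).trans
    (Finset.sum_le_univ_sum_of_nonneg fun ω => pow_nonneg (hf ω) j)
  exact pow_le_pow_left₀ ha (Finset.mem_filter.1 hω).2.le j

/-- Here `get` reads one coordinate of a state and `set` overwrites it, as in the laws of a lens;
the event `A` ignores that coordinate, and `p` holds for `k` of its values. -/
theorem card_mul_card_filter_of_lens {X C : Type*} [Fintype C] {get : X → C} {set : X → C → X}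
    (get_set : ∀ x c, get (set x c) = c) (set_set : ∀ x c d, set (set x c) d = set x d)
    (set_get : ∀ x, set x (get x) = x) {A : Finset X} (hA : ∀ x c, set x c ∈ A ↔ x ∈ A)
    {p : X → Prop} [DecidablePred p] {k : ℕ} (hp : ∀ x ∈ A, #{c | p (set x c)} = k) :
    Fintype.card C * #{x ∈ A | p x} = k * #A := by
  have swap : #{q ∈ A ×ˢ (Finset.univ : Finset C) | p (set q.1 q.2)} =
      #({x ∈ A | p x} ×ˢ (Finset.univ : Finset C)) := by
    refine Finset.card_bij' (fun q _ => (set q.1 q.2, get q.1)) (fun q _ => (set q.1 q.2, get q.1))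
      ?_ ?_ ?_ ?_ <;> simp +contextual [hA, get_set, set_set, set_get]
  rw [mul_comm, ← Finset.card_univ, ← Finset.card_product, ← swap, Finset.card_filter,
    Finset.sum_product]
  simp_rw [← Finset.card_filter]
  rw [Finset.sum_const_nat hp, mul_comm]

end Counting

/-- The vertices of the cuckoo graph: left vertices `Sum.inl a` and right vertices `Sum.inr b`. -/
abbrev Vertex (m : ℕ) := Fin m ⊕ Fin m

section Trails

variable {n m : ℕ} {h : HashPair n m} {F : Finset (Fin n)} {W : Set (Vertex m)}
  {e : Fin n} {es : List (Fin n)} {u v w : Vertex m}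

/-- The vertex `u` is an endpoint of the edge of item `e`. -/
def Incident (h : HashPair n m) (e : Fin n) (u : Vertex m) : Prop :=
  u = Sum.inl (h.1 e) ∨ u = Sum.inr (h.2 e)

/-- The vertex reached from `u` along the edge of `e`. Only the side of `u` is used, so the value
is meaningful when `u` is an endpoint of that edge. -/
def otherEnd (h : HashPair n m) (e : Fin n) : Vertex m → Vertex m
  | Sum.inl _ => Sum.inr (h.2 e)
  | Sum.inr _ => Sum.inl (h.1 e)

/-- The final vertex of the walk from `w` along a list of items. Walks are lists in reverse order:
the head is the item traversed last. -/
def dest (h : HashPair n m) (w : Vertex m) : List (Fin n) → Vertex m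
  | [] => w
  | e :: es => otherEnd h e (dest h w es)

/-- The list (last item first) is a walk from `w` along distinct items outside `F`. -/
def IsTrail (h : HashPair n m) (F : Finset (Fin n)) (w : Vertex m) : List (Fin n) → Prop
  | [] => True
  | e :: es => IsTrail h F w es ∧ e ∉ F ∧ e ∉ es ∧ Incident h e (dest h w es)

/-- The vertex `u` is the final vertex of a trail outside `F` that starts in `W`. -/
def Reachable (h : HashPair n m) (F : Finset (Fin n)) (W : Set (Vertex m)) (u : Vertex m) : Prop :=
  ∃ w ∈ W, ∃ es, IsTrail h F w es ∧ dest h w es = u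

theorem incident_otherEnd (h : HashPair n m) (e : Fin n) (u : Vertex m) :
    Incident h e (otherEnd h e u) := by
  cases u <;> simp [Incident, otherEnd]

theorem Incident.eq_or_eq_otherEnd (hu : Incident h e u) (hv : Incident h e v) :
    v = u ∨ v = otherEnd h e u := by
  rcases hu with rfl | rfl
  exacts [hv, hv.symm]

theorem Incident.conn (hu : Incident h e u) (hv : Incident h e v) : cuckooConn n m h.1 h.2 u v := by
  have hlr : cuckooConn n m h.1 h.2 (Sum.inl (h.1 e)) (Sum.inr (h.2 e)) := .rel _ _ ⟨e, rfl, rfl⟩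
  rcases hu with rfl | rfl <;> rcases hv with rfl | rfl
  exacts [.refl _, hlr, hlr.symm, .refl _]

theorem IsTrail.nodup (hes : IsTrail h F w es) : es.Nodup := by
  induction es with
  | nil => exact List.nodup_nil
  | cons e es ih => exact List.nodup_cons.2 ⟨hes.2.2.1, ih hes.1⟩

theorem IsTrail.exists_cons_of_mem (hes : IsTrail h F w es) (he : e ∈ es) :
    ∃ es', IsTrail h F w (e :: es') := by
  induction es with
  | nil => simp at he
  | cons a es ih =>
    rcases List.mem_cons.1 he with rfl | he
    exacts [⟨es, hes⟩, ih hes.1 he]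

theorem IsTrail.conn_dest (hes : IsTrail h F w es) : cuckooConn n m h.1 h.2 w (dest h w es) := by
  induction es with
  | nil => exact .refl _
  | cons e es ih => exact (ih hes.1).trans _ _ _ (hes.2.2.2.conn (incident_otherEnd h e _))

theorem reachable_of_mem (hw : w ∈ W) : Reachable h F W w :=
  ⟨w, hw, [], trivial, rfl⟩

theorem Reachable.exists_isTrail_cons (hu : Reachable h F W u) (he : Incident h e u)
    (heF : e ∉ F) : ∃ w ∈ W, ∃ es, IsTrail h F w (e :: es) := by
  obtain ⟨w, hw, es, hes, rfl⟩ := hu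
  by_cases hmem : e ∈ es
  · exact ⟨w, hw, hes.exists_cons_of_mem hmem⟩
  · exact ⟨w, hw, es, hes, heF, hmem, he⟩

theorem Reachable.of_incident (hu : Reachable h F W u) (heu : Incident h e u)
    (hev : Incident h e v) (heF : e ∉ F) : Reachable h F W v := by
  obtain ⟨w, hw, es, hes⟩ := hu.exists_isTrail_cons heu heF
  rcases hes.2.2.2.eq_or_eq_otherEnd hev with rfl | rfl
  exacts [⟨w, hw, es, hes.1, rfl⟩, ⟨w, hw, e :: es, hes, rfl⟩]

theorem reachable_iff_of_conn (hF : ∀ e ∈ F, ∀ u, Incident h e u → u ∈ W)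
    (huv : cuckooConn n m h.1 h.2 u v) : Reachable h F W u ↔ Reachable h F W v := by
  induction huv with
  | rel u v huv =>
    obtain ⟨e, hu, hv⟩ := huv
    by_cases he : e ∈ F
    · exact iff_of_true (reachable_of_mem (hF e he u (.inl hu)))
        (reachable_of_mem (hF e he v (.inr hv)))
    · exact ⟨fun h => h.of_incident (.inl hu) (.inr hv) he,
        fun h => h.of_incident (.inr hv) (.inl hu) he⟩
  | refl => rfl
  | symm _ _ _ ih => exact ih.symm
  | trans _ _ _ _ _ ih₁ ih₂ => exact ih₁.trans ih₂

/-- The lists without repetition, a finite set containing every trail of every cuckoo graph. -/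
def nodupLists (n : ℕ) : Finset (List (Fin n)) :=
  (Finset.univ : Finset {es : List (Fin n) // es.Nodup}).map (Function.Embedding.subtype _)

/-- The finite set of trails from `w` outside `F`. -/
noncomputable def trails (h : HashPair n m) (F : Finset (Fin n)) (w : Vertex m) :
    Finset (List (Fin n)) :=
  {es ∈ nodupLists n | IsTrail h F w es}

theorem mem_trails : es ∈ trails h F w ↔ IsTrail h F w es := by
  simpa [trails, nodupLists] using IsTrail.nodup

end Trails

/-- A sample point: the two hash functions together with the `N` chosen vertices. -/
abbrev Sample (n m N : ℕ) := HashPair n m × (Fin N → Vertex m)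

variable {n m N : ℕ}

section Exploration

variable {I : Finset (Fin N)} {F : Finset (Fin n)}

/-- The number of edges in the component of the `i`-th chosen vertex. -/
noncomputable def componentSize (ω : Sample n m N) (i : Fin N) : ℕ :=
  cuckooC n m ω.1.1 ω.1.2 (ω.2 i)

/-- Names for the vertices that are known once the vertices chosen at the indices `I` and the hash
values of the items `F` are exposed: `Sum.inl i` stands for the `i`-th chosen vertex,
`Sum.inr (Sum.inl e)` and `Sum.inr (Sum.inr e)` for the left and right endpoint of `e`. Distinct
positions may name the same vertex. -/
def positions (I : Finset (Fin N)) (F : Finset (Fin n)) : Finset (Fin N ⊕ Fin n ⊕ Fin n) :=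
  I.disjSum (F.disjSum F)

/-- The vertex named by a position. -/
def vertexAt (ω : Sample n m N) : Fin N ⊕ Fin n ⊕ Fin n → Vertex m
  | Sum.inl i => ω.2 i
  | Sum.inr (Sum.inl e) => Sum.inl (ω.1.1 e)
  | Sum.inr (Sum.inr e) => Sum.inr (ω.1.2 e)

theorem card_positions (I : Finset (Fin N)) (F : Finset (Fin n)) :
    #(positions I F) = #I + 2 * #F := by
  simp [positions, two_mul]

theorem card_le_card_positions (I : Finset (Fin N)) (F : Finset (Fin n)) :
    #I ≤ #(positions I F) := by
  rw [card_positions]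
  exact Nat.le_add_right _ _

theorem card_positions_union_toFinset_le (I : Finset (Fin N)) (F : Finset (Fin n))
    (es : List (Fin n)) : #(positions I (F ∪ es.toFinset)) ≤ #(positions I F) + 2 * es.length := by
  have hunion := Finset.card_union_le F es.toFinset
  have hlist := List.toFinset_card_le es
  rw [card_positions, card_positions]
  lia

theorem card_positions_insert_le (I : Finset (Fin N)) (F : Finset (Fin n)) (i : Fin N) :
    #(positions (insert i I) F) ≤ #(positions I F) + 1 := by
  have hinsert := Finset.card_insert_le i I
  rw [card_positions, card_positions]
  lia

/-- The item that a trail from a position accounts for: the item traversed last or, for the empty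
trail, the item whose left endpoint is the position. -/
def countedItem : (_ : Fin N ⊕ Fin n ⊕ Fin n) × List (Fin n) → Option (Fin n)
  | ⟨_, e :: _⟩ => some e
  | ⟨Sum.inr (Sum.inl e), []⟩ => some e
  | _ => none

/-- The trails that connect an exposed position to the `i`-th chosen vertex. -/
noncomputable def linkingTrails (ω : Sample n m N) (I : Finset (Fin N)) (F : Finset (Fin n))
    (i : Fin N) : Finset ((_ : Fin N ⊕ Fin n ⊕ Fin n) × List (Fin n)) :=
  (positions I F).sigma fun p =>
    {es ∈ trails ω.1 F (vertexAt ω p) | dest ω.1 (vertexAt ω p) es = ω.2 i}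

theorem reachable_of_conn_vertexAt (ω : Sample n m N) {p : Fin N ⊕ Fin n ⊕ Fin n}
    (hp : p ∈ positions I F) {u : Vertex m} (hu : cuckooConn n m ω.1.1 ω.1.2 u (vertexAt ω p)) :
    Reachable ω.1 F {w | ∃ q ∈ positions I F, vertexAt ω q = w} u := by
  refine (reachable_iff_of_conn ?_ hu).2 (reachable_of_mem ⟨p, hp, rfl⟩)
  rintro e he u (rfl | rfl)
  exacts [⟨Sum.inr (Sum.inl e), by simp [positions, he], rfl⟩,
    ⟨Sum.inr (Sum.inr e), by simp [positions, he], rfl⟩]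

theorem componentSize_le_sum_card_trails (ω : Sample n m N) (F : Finset (Fin n)) {i : Fin N}
    (hi : i ∈ I) :
    componentSize ω i ≤
      ∑ p ∈ positions I F with cuckooConn n m ω.1.1 ω.1.2 (vertexAt ω p) (ω.2 i),
        #(trails ω.1 F (vertexAt ω p)) := by
  rw [componentSize, cuckooC, Nat.card_eq_fintype_card, Fintype.card_subtype,
    ← Finset.card_map Function.Embedding.some, ← Finset.card_sigma]
  refine Finset.card_le_card_of_surjOn countedItem ?_
  simp only [Set.SurjOn, Set.subset_def, Finset.mem_coe, Finset.mem_map, Finset.mem_filter_univ]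
  rintro _ ⟨x, hx, rfl⟩
  by_cases hxF : x ∈ F
  · refine ⟨⟨Sum.inr (Sum.inl x), []⟩, ?_, rfl⟩
    have hpos : Sum.inr (Sum.inl x) ∈ positions I F := by simp [positions, hxF]
    simpa [mem_trails] using ⟨⟨hpos, hx⟩, trivial⟩
  · have hleft : Incident ω.1 x (Sum.inl (ω.1.1 x)) := .inl rfl
    have hpos : Sum.inl i ∈ positions I F := by simp [positions, hi]
    obtain ⟨_, ⟨p, hp, rfl⟩, es, hes⟩ :=
      (reachable_of_conn_vertexAt ω hpos hx).exists_isTrail_cons hleft hxF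
    have hconn : cuckooConn n m ω.1.1 ω.1.2 (vertexAt ω p) (ω.2 i) :=
      (hes.conn_dest.trans _ _ _ ((incident_otherEnd _ x _).conn hleft)).trans _ _ _ hx
    exact ⟨⟨p, x :: es⟩, by simpa [mem_trails] using ⟨⟨hp, hconn⟩, hes⟩, rfl⟩

/-- Either the component of the `i`-th vertex avoids the exposed part of the graph, and is counted
by the trails from this vertex alone, or some trail links it to the exposed part. -/
theorem componentSize_le_card_trails_add (ω : Sample n m N) (I : Finset (Fin N))
    (F : Finset (Fin n)) (i : Fin N) :
    componentSize ω i ≤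
      #(trails ω.1 F (ω.2 i)) + #(linkingTrails ω I F i) * componentSize ω i := by
  by_cases hlink : ∃ p ∈ positions I F, cuckooConn n m ω.1.1 ω.1.2 (vertexAt ω p) (ω.2 i)
  · obtain ⟨p, hp, hconn⟩ := hlink
    obtain ⟨_, ⟨q, hq, rfl⟩, es, hes, hdest⟩ := reachable_of_conn_vertexAt ω hp hconn.symm
    have hmem : ⟨q, es⟩ ∈ linkingTrails ω I F i := by
      simpa [linkingTrails, mem_trails] using ⟨hq, hes, hdest⟩
    exact le_add_left (Nat.le_mul_of_pos_left _ (Finset.card_pos.2 ⟨_, hmem⟩))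
  · push Not at hlink
    have hsub : {p ∈ positions (insert i I) F |
        cuckooConn n m ω.1.1 ω.1.2 (vertexAt ω p) (ω.2 i)} ⊆ {Sum.inl i} := by
      intro p hp
      obtain ⟨hp, hconn⟩ := Finset.mem_filter.1 hp
      by_contra hne
      refine hlink p ?_ hconn
      rcases p with k | p <;> simp_all [positions]
    calc componentSize ω i
        ≤ _ := componentSize_le_sum_card_trails ω F (Finset.mem_insert_self i I)
      _ ≤ ∑ p ∈ {Sum.inl i}, #(trails ω.1 F (vertexAt ω p)) := Finset.sum_le_sum_of_subset hsub
      _ = #(trails ω.1 F (ω.2 i)) := Finset.sum_singleton _ _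
      _ ≤ _ := le_add_right le_rfl

end Exploration

section Exposure

variable {α β γ : Type*} {I I' : Finset (Fin N)} {F F' : Finset (Fin n)}
  {A : Finset (Sample n m N)} {u : Sample n m N → Vertex m}

/-- The function `f` of the sample point depends only on the vertices chosen at the indices `I` and
on the hash values of the items `F`. For an event `A` this is used with `f := (· ∈ A)`. -/
def DeterminedBy (I : Finset (Fin N)) (F : Finset (Fin n)) (f : Sample n m N → α) : Prop :=
  ∀ ω ω' : Sample n m N, (∀ e ∈ F, ω.1.1 e = ω'.1.1 e ∧ ω.1.2 e = ω'.1.2 e) →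
    (∀ i ∈ I, ω.2 i = ω'.2 i) → f ω = f ω'

theorem DeterminedBy.mono {f : Sample n m N → α} (hf : DeterminedBy I F f) (hI : I ⊆ I')
    (hF : F ⊆ F') : DeterminedBy I' F' f :=
  fun ω ω' hitem hvertex =>
    hf ω ω' (fun e he => hitem e (hF he)) fun i hi => hvertex i (hI hi)

theorem DeterminedBy.map₂ {f : Sample n m N → α} {g : Sample n m N → β}
    (hf : DeterminedBy I F f) (hg : DeterminedBy I F g) (op : α → β → γ) :
    DeterminedBy I F fun ω => op (f ω) (g ω) :=
  fun ω ω' hitem hvertex => congrArg₂ op (hf ω ω' hitem hvertex) (hg ω ω' hitem hvertex)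

theorem DeterminedBy.filter {p : Sample n m N → Prop} [DecidablePred p]
    (hA : DeterminedBy I F (· ∈ A)) (hp : DeterminedBy I F p) :
    DeterminedBy I F (· ∈ A.filter p) := by
  simpa only [Finset.mem_filter] using hA.map₂ hp And

theorem determinedBy_hashes {e : Fin n} (he : e ∈ F) :
    DeterminedBy I F fun ω : Sample n m N => (ω.1.1 e, ω.1.2 e) :=
  fun _ _ hitem _ => Prod.ext (hitem e he).1 (hitem e he).2

theorem determinedBy_vertex {i : Fin N} (hi : i ∈ I) :
    DeterminedBy I F fun ω : Sample n m N => ω.2 i :=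
  fun _ _ _ hvertex => hvertex i hi

theorem determinedBy_vertexAt {p : Fin N ⊕ Fin n ⊕ Fin n} (hp : p ∈ positions I F) :
    DeterminedBy I F fun ω : Sample n m N => vertexAt ω p := by
  intro ω ω' hitem hvertex
  rcases p with i | e | e
  · exact hvertex i (by simpa [positions] using hp)
  · exact congrArg Sum.inl (hitem e (by simpa [positions] using hp)).1
  · exact congrArg Sum.inr (hitem e (by simpa [positions] using hp)).2

theorem DeterminedBy.otherEnd (hu : DeterminedBy I F u) {e : Fin n} (he : e ∈ F) :
    DeterminedBy I F fun ω => otherEnd ω.1 e (u ω) := by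
  intro ω ω' hitem hvertex
  beta_reduce
  rw [hu ω ω' hitem hvertex]
  cases u ω' <;> simp [Cuckoo.otherEnd, hitem e he]

theorem DeterminedBy.incident (hu : DeterminedBy I F u) {e : Fin n} (he : e ∈ F) :
    DeterminedBy I F fun ω => Incident ω.1 e (u ω) :=
  hu.map₂ (determinedBy_hashes he) fun v c => v = Sum.inl c.1 ∨ v = Sum.inr c.2

theorem DeterminedBy.dest (hu : DeterminedBy I F u) (es : List (Fin n)) :
    DeterminedBy I (F ∪ es.toFinset) fun ω => dest ω.1 (u ω) es := by
  induction es with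
  | nil => simpa [Cuckoo.dest] using hu
  | cons e es ih =>
    refine (ih.mono subset_rfl ?_).otherEnd (by simp)
    simp only [List.toFinset_cons, Finset.union_insert, Finset.subset_insert]

theorem DeterminedBy.isTrail (hu : DeterminedBy I F u) (es : List (Fin n)) :
    DeterminedBy I (F ∪ es.toFinset) fun ω => IsTrail ω.1 F (u ω) es := by
  induction es with
  | nil => exact fun _ _ _ _ => rfl
  | cons e es ih =>
    have hsub : F ∪ es.toFinset ⊆ F ∪ (e :: es).toFinset := by
      simp only [List.toFinset_cons, Finset.union_insert, Finset.subset_insert]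
    have hinc := ((hu.dest es).mono subset_rfl hsub).incident (e := e) (by simp)
    exact (ih.mono subset_rfl hsub).map₂ hinc fun a b => a ∧ e ∉ F ∧ e ∉ es ∧ b

theorem DeterminedBy.filter_isTrail (hA : DeterminedBy I F (· ∈ A)) (hu : DeterminedBy I F u)
    (es : List (Fin n)) :
    DeterminedBy I (F ∪ es.toFinset) (· ∈ A.filter fun ω => IsTrail ω.1 F (u ω) es) :=
  (hA.mono subset_rfl Finset.subset_union_left).filter (hu.isTrail es)

theorem card_filter_incident (hA : DeterminedBy I F (· ∈ A)) (hu : DeterminedBy I F u)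
    {e : Fin n} (he : e ∉ F) : m ^ 2 * #{ω ∈ A | Incident ω.1 e (u ω)} = m * #A := by
  let resample (ω : Sample n m N) (c : Fin m × Fin m) : Sample n m N :=
    ((Function.update ω.1.1 e c.1, Function.update ω.1.2 e c.2), ω.2)
  have hfix {α : Type} {f : Sample n m N → α} (hf : DeterminedBy I F f) (ω c) :
      f (resample ω c) = f ω :=
    hf _ _ (fun a ha => by simp [resample, ne_of_mem_of_not_mem ha he]) fun _ _ => rfl
  have hcount (v : Vertex m) : #{c : Fin m × Fin m | v = Sum.inl c.1 ∨ v = Sum.inr c.2} = m := by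
    rcases v with a | a
    · rw [show ({c | _} : Finset (Fin m × Fin m)) = {a} ×ˢ Finset.univ by
        ext ⟨b, c⟩; simp [eq_comm]]
      simp
    · rw [show ({c | _} : Finset (Fin m × Fin m)) = Finset.univ ×ˢ {a} by
        ext ⟨b, c⟩; simp [eq_comm]]
      simp
  have := card_mul_card_filter_of_lens (get := fun ω : Sample n m N => (ω.1.1 e, ω.1.2 e))
    (set := resample) (A := A) (p := fun ω => Incident ω.1 e (u ω)) (k := m) (by simp [resample])
    (by simp [resample]) (by simp [resample]) (fun ω c => iff_of_eq (hfix hA ω c))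
    (fun ω _ => by simpa [Incident, hfix hu, resample] using hcount (u ω))
  simpa [sq] using this

theorem card_filter_vertex_eq (hA : DeterminedBy I F (· ∈ A)) (hu : DeterminedBy I F u)
    {i : Fin N} (hi : i ∉ I) : 2 * m * #{ω ∈ A | u ω = ω.2 i} = #A := by
  let resample (ω : Sample n m N) (v : Vertex m) : Sample n m N :=
    (ω.1, Function.update ω.2 i v)
  have hfix {α : Type} {f : Sample n m N → α} (hf : DeterminedBy I F f) (ω v) :
      f (resample ω v) = f ω :=
    hf _ _ (fun _ _ => ⟨rfl, rfl⟩) fun a ha => by simp [resample, ne_of_mem_of_not_mem ha hi]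
  have := card_mul_card_filter_of_lens (get := fun ω : Sample n m N => ω.2 i)
    (set := resample) (A := A) (p := fun ω => u ω = ω.2 i) (k := 1) (by simp [resample])
    (by simp [resample]) (by simp [resample]) (fun ω v => iff_of_eq (hfix hA ω v))
    (fun ω _ => by simp [hfix hu, resample, Finset.filter_eq])
  simpa [two_mul] using this

/-- Each new edge of a trail has its near endpoint at a prescribed vertex, an event of conditional
probability `1 / m`. -/
theorem card_filter_isTrail_mul_pow_le (hm : 0 < m) (hA : DeterminedBy I F (· ∈ A))
    (hu : DeterminedBy I F u) (es : List (Fin n)) :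
    #{ω ∈ A | IsTrail ω.1 F (u ω) es} * m ^ es.length ≤ #A := by
  induction es with
  | nil => simpa only [List.length_nil, pow_zero, mul_one] using Finset.card_filter_le A _
  | cons e es ih =>
    by_cases hfresh : e ∉ F ∧ e ∉ es
    · have hsplit : {ω ∈ A | IsTrail ω.1 F (u ω) (e :: es)} =
          {ω ∈ {ω ∈ A | IsTrail ω.1 F (u ω) es} | Incident ω.1 e (dest ω.1 (u ω) es)} := by
        rw [Finset.filter_filter]
        simp only [IsTrail, hfresh.1, hfresh.2, not_false_eq_true, true_and]
      have hnew := card_filter_incident (hA.filter_isTrail hu es) (hu.dest es) (e := e)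
        (by simpa using hfresh)
      rw [sq, mul_assoc, Nat.mul_right_inj hm.ne'] at hnew
      rwa [hsplit, List.length_cons, pow_succ', ← mul_assoc, mul_comm _ m, hnew]
    · have hempty : ∀ ω ∈ A, ¬ IsTrail ω.1 F (u ω) (e :: es) :=
        fun ω _ htrail => hfresh ⟨htrail.2.1, htrail.2.2.1⟩
      simp [Finset.filter_false_of_mem hempty]

end Exposure

section Moments

variable {I : Finset (Fin N)} {F : Finset (Fin n)} {A : Finset (Sample n m N)}
  {u : Sample n m N → Vertex m} {i : Fin N} {j : ℕ} {K z ρ y E : ℝ}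

/-- The sum of the component sizes of the `N` chosen vertices. -/
noncomputable def total (ω : Sample n m N) : ℝ :=
  ∑ i : Fin N, (componentSize ω i : ℝ)

theorem total_nonneg (ω : Sample n m N) : 0 ≤ total ω :=
  Finset.sum_nonneg fun _ _ => Nat.cast_nonneg _

/-- A bound on the `j`-th moment of `total` under every partial exposure: conditionally on an event
determined by the vertices at `I` and the items in `F`, it is at most `K * z ^ s`, where `s` is the
number of exposed positions. -/
def MomentBound (n m N j : ℕ) (K z : ℝ) : Prop :=
  ∀ (I : Finset (Fin N)) (F : Finset (Fin n)) (A : Finset (Sample n m N)),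
    DeterminedBy I F (· ∈ A) → ∑ ω ∈ A, total ω ^ j ≤ K * z ^ #(positions I F) * #A

/-- A trail of length `l` has conditional probability at most `m⁻ˡ`, and there are at most `nˡ` of
them, so a weight growing like `xˡ` is summed by a geometric series of ratio `n * x / m`. -/
theorem sum_sum_trails_le (hm : 0 < m) (hA : DeterminedBy I F (· ∈ A)) (hu : DeterminedBy I F u)
    {B x : ℝ} (hB : 0 ≤ B) (hx : 0 ≤ x) (hρ : n * x ≤ ρ * m) (hρ1 : ρ < 1)
    {g : List (Fin n) → Sample n m N → ℝ}
    (hg : ∀ es, ∑ ω ∈ A with IsTrail ω.1 F (u ω) es, g es ω ≤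
      B * x ^ es.length * #{ω ∈ A | IsTrail ω.1 F (u ω) es}) :
    ∑ ω ∈ A, ∑ es ∈ trails ω.1 F (u ω), g es ω ≤ B * (1 - ρ)⁻¹ * #A := by
  have hm' : (0 : ℝ) < m := by exact_mod_cast hm
  have hratio : n * (x / m) ≤ ρ := by rwa [← mul_div_assoc, div_le_iff₀ hm']
  have hprob (es : List (Fin n)) :
      (#{ω ∈ A | IsTrail ω.1 F (u ω) es} : ℝ) ≤ #A / (m : ℝ) ^ es.length := by
    rw [le_div_iff₀ (by positivity)]
    exact_mod_cast card_filter_isTrail_mul_pow_le hm hA hu es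
  have hgeom : ∑ es ∈ nodupLists n, (x / m) ^ es.length ≤ (1 - ρ)⁻¹ := by
    have hsum := sum_pow_length_le (nodupLists n) (x := x / m) (by positivity)
      (by simpa using hratio.trans_lt hρ1)
    rw [Fintype.card_fin] at hsum
    exact hsum.trans (inv_anti₀ (by linarith) (by linarith))
  calc ∑ ω ∈ A, ∑ es ∈ trails ω.1 F (u ω), g es ω
      = ∑ es ∈ nodupLists n, ∑ ω ∈ A with IsTrail ω.1 F (u ω) es, g es ω := by
        simp only [trails, Finset.sum_filter]
        exact Finset.sum_comm
    _ ≤ ∑ es ∈ nodupLists n, B * #A * (x / m) ^ es.length := by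
        refine Finset.sum_le_sum fun es _ => (hg es).trans ?_
        calc B * x ^ es.length * #{ω ∈ A | IsTrail ω.1 F (u ω) es}
            ≤ B * x ^ es.length * (#A / (m : ℝ) ^ es.length) := by gcongr; exact hprob es
          _ = B * #A * (x / m) ^ es.length := by rw [div_pow]; ring
    _ ≤ B * (1 - ρ)⁻¹ * #A := by
        rw [← Finset.mul_sum, mul_right_comm]
        gcongr

theorem pow_card_positions_union_toFinset_le (hz : 1 ≤ z) (I : Finset (Fin N)) (F : Finset (Fin n))
    (es : List (Fin n)) :
    z ^ #(positions I (F ∪ es.toFinset)) ≤ z ^ #(positions I F) * (z ^ 2) ^ es.length := by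
  rw [← pow_mul, ← pow_add]
  exact pow_le_pow_right₀ hz (card_positions_union_toFinset_le I F es)

theorem MomentBound.sum_card_trails_mul_le (h : MomentBound n m N j K z) (hm : 0 < m)
    (hK : 0 ≤ K) (hz : 1 ≤ z) (hρ : n * z ^ 2 ≤ ρ * m) (hρ1 : ρ < 1)
    (hA : DeterminedBy I F (· ∈ A)) (hu : DeterminedBy I F u) :
    ∑ ω ∈ A, #(trails ω.1 F (u ω)) * total ω ^ j ≤
      K * z ^ #(positions I F) * (1 - ρ)⁻¹ * #A := by
  simp_rw [← nsmul_eq_mul, ← Finset.sum_const]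
  refine sum_sum_trails_le hm hA hu (by positivity) (by positivity) hρ hρ1 fun es => ?_
  refine (h I _ _ (hA.filter_isTrail hu es)).trans ?_
  rw [mul_assoc K (z ^ #(positions I F))]
  gcongr
  exact pow_card_positions_union_toFinset_le hz I F es

theorem MomentBound.sum_componentSize_mul_le_of_mem (h : MomentBound n m N j K z) (hm : 0 < m)
    (hK : 0 ≤ K) (hz : 1 ≤ z) (hρ : n * z ^ 2 ≤ ρ * m) (hρ1 : ρ < 1)
    (hA : DeterminedBy I F (· ∈ A)) (hi : i ∈ I) :
    ∑ ω ∈ A, componentSize ω i * total ω ^ j ≤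
      #(positions I F) * (K * z ^ #(positions I F) * (1 - ρ)⁻¹ * #A) := by
  have hsize (ω : Sample n m N) :
      (componentSize ω i : ℝ) ≤ ∑ p ∈ positions I F, (#(trails ω.1 F (vertexAt ω p)) : ℝ) := by
    exact_mod_cast (componentSize_le_sum_card_trails ω F hi).trans
      (Finset.sum_le_sum_of_subset (Finset.filter_subset _ _))
  calc ∑ ω ∈ A, componentSize ω i * total ω ^ j
      ≤ ∑ ω ∈ A, (∑ p ∈ positions I F, (#(trails ω.1 F (vertexAt ω p)) : ℝ)) * total ω ^ j := by
        gcongr with ω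
        exacts [pow_nonneg (total_nonneg ω) j, hsize ω]
    _ = ∑ p ∈ positions I F, ∑ ω ∈ A, #(trails ω.1 F (vertexAt ω p)) * total ω ^ j := by
        simp only [Finset.sum_mul]
        exact Finset.sum_comm
    _ ≤ _ := by
        rw [← nsmul_eq_mul]
        exact Finset.sum_le_card_nsmul _ _ _ fun p hp =>
          h.sum_card_trails_mul_le hm hK hz hρ hρ1 hA (determinedBy_vertexAt hp)

/-- Hitting a prescribed vertex costs a factor `1 / (2 * m)`, because the `i`-th vertex is still
unexposed. -/
theorem MomentBound.sum_componentSize_mul_le_of_vertex_eq (h : MomentBound n m N j K z) (hm : 0 < m)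
    (hK : 0 ≤ K) (hz : 1 ≤ z) (hy : 0 ≤ y) (hE1 : 1 ≤ E) (hE : ∀ k : ℕ, k ≤ y * E ^ k)
    (hρ : n * z ^ 2 ≤ ρ * m) (hρ1 : ρ < 1)
    (hA : DeterminedBy I F (· ∈ A)) (hu : DeterminedBy I F u) (hi : i ∉ I) :
    ∑ ω ∈ A with u ω = ω.2 i, componentSize ω i * total ω ^ j ≤
      y * K * (z * E) ^ (#(positions I F) + 1) * (1 - ρ)⁻¹ / (2 * m) * #A := by
  have : (0 : ℝ) < m := by exact_mod_cast hm
  have : 0 ≤ (1 - ρ)⁻¹ := inv_nonneg.2 (sub_nonneg.2 hρ1.le)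
  have hsub := Finset.subset_insert i I
  have hhit : DeterminedBy (insert i I) F (· ∈ A.filter fun ω => u ω = ω.2 i) :=
    (hA.mono hsub subset_rfl).filter ((hu.mono hsub subset_rfl).map₂
      (determinedBy_vertex (Finset.mem_insert_self i I)) Eq)
  have hcard : (2 * m * #{ω ∈ A | u ω = ω.2 i} : ℝ) = #A := by
    exact_mod_cast card_filter_vertex_eq hA hu hi
  set s := #(positions (insert i I) F)
  calc ∑ ω ∈ A with u ω = ω.2 i, componentSize ω i * total ω ^ j
      ≤ s * (K * z ^ s * (1 - ρ)⁻¹ * #{ω ∈ A | u ω = ω.2 i}) :=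
        h.sum_componentSize_mul_le_of_mem hm hK hz hρ hρ1 hhit (Finset.mem_insert_self i I)
    _ ≤ y * E ^ s * (K * z ^ s * (1 - ρ)⁻¹ * #{ω ∈ A | u ω = ω.2 i}) := by
        gcongr
        exact hE s
    _ = y * K * (z * E) ^ s * (1 - ρ)⁻¹ / (2 * m) * #A := by
        rw [← hcard, mul_pow]
        field_simp
    _ ≤ _ := by
        gcongr
        exacts [one_le_mul_of_one_le_of_one_le hz hE1, card_positions_insert_le I F i]

theorem MomentBound.sum_card_trails_dest_eq_mul_le (h : MomentBound n m N j K z) (hm : 0 < m)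
    (hK : 0 ≤ K) (hz : 1 ≤ z) (hy : 0 ≤ y) (hE1 : 1 ≤ E) (hE : ∀ k : ℕ, k ≤ y * E ^ k)
    (hρ : n * (z * E) ^ 2 ≤ ρ * m) (hρ1 : ρ < 1)
    (hA : DeterminedBy I F (· ∈ A)) (hu : DeterminedBy I F u) (hi : i ∉ I) :
    ∑ ω ∈ A, #{es ∈ trails ω.1 F (u ω) | dest ω.1 (u ω) es = ω.2 i} *
        (componentSize ω i * total ω ^ j) ≤
      y * K * (z * E) ^ (#(positions I F) + 1) * (1 - ρ)⁻¹ / (2 * m) * (1 - ρ)⁻¹ * #A := by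
  have : 0 ≤ (1 - ρ)⁻¹ := inv_nonneg.2 (sub_nonneg.2 hρ1.le)
  have hzE : 1 ≤ z * E := one_le_mul_of_one_le_of_one_le hz hE1
  have hρz : n * z ^ 2 ≤ ρ * m := by
    refine le_trans ?_ hρ
    gcongr
    exact le_mul_of_one_le_right (by positivity) hE1
  simp_rw [← nsmul_eq_mul (#_), ← Finset.sum_const, Finset.sum_filter]
  refine sum_sum_trails_le hm hA hu (by positivity) (by positivity) hρ hρ1 fun es => ?_
  rw [← Finset.sum_filter]
  calc ∑ ω ∈ {ω ∈ A | IsTrail ω.1 F (u ω) es} with dest ω.1 (u ω) es = ω.2 i,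
        componentSize ω i * total ω ^ j
      ≤ y * K * (z * E) ^ (#(positions I (F ∪ es.toFinset)) + 1) * (1 - ρ)⁻¹ / (2 * m) *
          #{ω ∈ A | IsTrail ω.1 F (u ω) es} :=
        h.sum_componentSize_mul_le_of_vertex_eq hm hK hz hy hE1 hE hρz hρ1
          (hA.filter_isTrail hu es) (hu.dest es) hi
    _ ≤ y * K * ((z * E) ^ #(positions I F) * ((z * E) ^ 2) ^ es.length * (z * E)) *
          (1 - ρ)⁻¹ / (2 * m) * #{ω ∈ A | IsTrail ω.1 F (u ω) es} := by
        rw [pow_succ]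
        gcongr
        exact pow_card_positions_union_toFinset_le hzE I F es
    _ = _ := by ring

theorem MomentBound.sum_card_linkingTrails_mul_le (h : MomentBound n m N j K z)
    (hK : 0 ≤ K) (hz : 1 ≤ z) (hy : 0 < y) (hym : y ^ 2 ≤ m) (hE1 : 1 ≤ E)
    (hE : ∀ k : ℕ, k ≤ y * E ^ k) (hρ : n * (z * E) ^ 2 ≤ ρ * m) (hρ1 : ρ < 1)
    (hA : DeterminedBy I F (· ∈ A)) (hi : i ∉ I) :
    ∑ ω ∈ A, #(linkingTrails ω I F i) * (componentSize ω i * total ω ^ j) ≤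
      z * E * (1 - ρ)⁻¹ ^ 2 * K * (z * E ^ 2) ^ #(positions I F) * #A := by
  have hm' : (0 : ℝ) < m := (by positivity : 0 < y ^ 2).trans_le hym
  have hm : 0 < m := by exact_mod_cast hm'
  set s := #(positions I F)
  have hs : s * y ≤ E ^ s * (2 * m) :=
    calc s * y ≤ y * E ^ s * y := by gcongr; exact hE s
      _ = E ^ s * (1 * y ^ 2) := by ring
      _ ≤ E ^ s * (2 * m) := by gcongr; exact one_le_two
  calc ∑ ω ∈ A, #(linkingTrails ω I F i) * (componentSize ω i * total ω ^ j)
      = ∑ p ∈ positions I F, ∑ ω ∈ A,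
          #{es ∈ trails ω.1 F (vertexAt ω p) | dest ω.1 (vertexAt ω p) es = ω.2 i} *
            (componentSize ω i * total ω ^ j) := by
        rw [Finset.sum_comm]
        simp only [linkingTrails, Finset.card_sigma, Nat.cast_sum, Finset.sum_mul]
    _ ≤ s * (y * K * (z * E) ^ (s + 1) * (1 - ρ)⁻¹ / (2 * m) * (1 - ρ)⁻¹ * #A) := by
        rw [← nsmul_eq_mul]
        exact Finset.sum_le_card_nsmul _ _ _ fun p hp =>
          h.sum_card_trails_dest_eq_mul_le hm hK hz hy.le hE1 hE hρ hρ1 hA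
            (determinedBy_vertexAt hp) hi
    _ = s * y / (2 * m) * (z * E * (1 - ρ)⁻¹ ^ 2 * K * (z * E) ^ s * #A) := by ring
    _ ≤ E ^ s * (z * E * (1 - ρ)⁻¹ ^ 2 * K * (z * E) ^ s * #A) := by
        gcongr
        exact div_le_of_le_mul₀ (by positivity) (by positivity) hs
    _ = z * E * (1 - ρ)⁻¹ ^ 2 * K * (z * E ^ 2) ^ s * #A := by ring

theorem MomentBound.sum_componentSize_mul_le_of_notMem (h : MomentBound n m N j K z)
    (hK : 0 ≤ K) (hz : 1 ≤ z) (hy : 0 < y) (hym : y ^ 2 ≤ m) (hE1 : 1 ≤ E)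
    (hE : ∀ k : ℕ, k ≤ y * E ^ k) (hρ : n * (z * E) ^ 2 ≤ ρ * m) (hρ1 : ρ < 1)
    (hA : DeterminedBy I F (· ∈ A)) (hi : i ∉ I) :
    ∑ ω ∈ A, componentSize ω i * total ω ^ j ≤
      2 * (z * E * (1 - ρ)⁻¹ ^ 2 * K * (z * E ^ 2) ^ #(positions I F) * #A) := by
  have hm' : (0 : ℝ) < m := (by positivity : 0 < y ^ 2).trans_le hym
  have hm : 0 < m := by exact_mod_cast hm'
  have hρ0 : 0 ≤ ρ :=
    nonneg_of_mul_nonneg_left ((by positivity : 0 ≤ n * (z * E) ^ 2).trans hρ) hm'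
  have hχ : 1 ≤ (1 - ρ)⁻¹ := (one_le_inv₀ (by linarith)).2 (by linarith)
  have hzE : z ≤ z * E := le_mul_of_one_le_right (by positivity) hE1
  have hsize (ω : Sample n m N) : (componentSize ω i : ℝ) ≤
      #(trails ω.1 F (ω.2 i)) + #(linkingTrails ω I F i) * componentSize ω i := by
    exact_mod_cast componentSize_le_card_trails_add ω I F i
  have hlinked := h.sum_card_linkingTrails_mul_le hK hz hy hym hE1 hE hρ hρ1 hA hi
  set s := #(positions I F)
  have hfresh : ∑ ω ∈ A, #(trails ω.1 F (ω.2 i)) * total ω ^ j ≤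
      z * E * (1 - ρ)⁻¹ ^ 2 * K * (z * E ^ 2) ^ s * #A :=
    calc ∑ ω ∈ A, #(trails ω.1 F (ω.2 i)) * total ω ^ j
        ≤ K * z ^ #(positions (insert i I) F) * (1 - ρ)⁻¹ * #A :=
          h.sum_card_trails_mul_le hm hK hz (le_trans (by gcongr) hρ) hρ1
            (hA.mono (Finset.subset_insert i I) subset_rfl)
            (determinedBy_vertex (Finset.mem_insert_self i I))
      _ ≤ K * z ^ (s + 1) * (1 - ρ)⁻¹ * #A := by
          gcongr
          exact card_positions_insert_le I F i
      _ = z * (1 - ρ)⁻¹ * K * z ^ s * #A := by ring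
      _ ≤ z * E * (1 - ρ)⁻¹ ^ 2 * K * (z * E ^ 2) ^ s * #A := by
          gcongr
          exacts [le_self_pow₀ hχ two_ne_zero,
            le_mul_of_one_le_right (by positivity) (one_le_pow₀ hE1)]
  calc ∑ ω ∈ A, componentSize ω i * total ω ^ j
      ≤ ∑ ω ∈ A, (#(trails ω.1 F (ω.2 i)) + #(linkingTrails ω I F i) * componentSize ω i) *
          total ω ^ j := by
        gcongr with ω
        exacts [pow_nonneg (total_nonneg ω) j, hsize ω]
    _ = ∑ ω ∈ A, #(trails ω.1 F (ω.2 i)) * total ω ^ j +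
          ∑ ω ∈ A, #(linkingTrails ω I F i) * (componentSize ω i * total ω ^ j) := by
        simp only [add_mul, Finset.sum_add_distrib, mul_assoc]
    _ ≤ _ := by linarith

theorem MomentBound.sum_sum_componentSize_mul_le (h : MomentBound n m N j K z) (hm : 0 < m)
    (hK : 0 ≤ K) (hz : 1 ≤ z) (hy : 0 ≤ y) (hyN : y ^ 2 ≤ N) (hE1 : 1 ≤ E)
    (hE : ∀ k : ℕ, k ≤ y * E ^ k) (hρ : n * z ^ 2 ≤ ρ * m) (hρ1 : ρ < 1)
    (hA : DeterminedBy I F (· ∈ A)) :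
    ∑ i ∈ I, ∑ ω ∈ A, componentSize ω i * total ω ^ j ≤
      N * ((1 - ρ)⁻¹ * K * (z * E ^ 2) ^ #(positions I F) * #A) := by
  have : 0 ≤ (1 - ρ)⁻¹ := inv_nonneg.2 (sub_nonneg.2 hρ1.le)
  set s := #(positions I F)
  have hs : (s * s : ℝ) ≤ N * (E ^ 2) ^ s :=
    calc (s * s : ℝ) ≤ y * E ^ s * (y * E ^ s) := by gcongr <;> exact hE s
      _ = y ^ 2 * (E ^ 2) ^ s := by ring
      _ ≤ N * (E ^ 2) ^ s := by gcongr
  calc ∑ i ∈ I, ∑ ω ∈ A, componentSize ω i * total ω ^ j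
      ≤ #I * (s * (K * z ^ s * (1 - ρ)⁻¹ * #A)) := by
        rw [← nsmul_eq_mul]
        exact Finset.sum_le_card_nsmul _ _ _ fun i hi =>
          h.sum_componentSize_mul_le_of_mem hm hK hz hρ hρ1 hA hi
    _ ≤ s * (s * (K * z ^ s * (1 - ρ)⁻¹ * #A)) := by
        gcongr
        exact card_le_card_positions I F
    _ = s * s * ((1 - ρ)⁻¹ * K * z ^ s * #A) := by ring
    _ ≤ N * (E ^ 2) ^ s * ((1 - ρ)⁻¹ * K * z ^ s * #A) := by gcongr
    _ = N * ((1 - ρ)⁻¹ * K * (z * E ^ 2) ^ s * #A) := by ring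

theorem MomentBound.succ {Z : ℝ} (h : MomentBound n m N j K z)
    (hK : 0 ≤ K) (hz : 1 ≤ z) (hy : 0 < y) (hyN : y ^ 2 ≤ N) (hym : y ^ 2 ≤ m) (hE1 : 1 ≤ E)
    (hE : ∀ k : ℕ, k ≤ y * E ^ k) (hZ : z * E ≤ Z) (hρ : n * Z ^ 2 ≤ ρ * m) (hρ1 : ρ < 1) :
    MomentBound n m N (j + 1) (K * (3 * Z * (1 - ρ)⁻¹ ^ 2 * N)) (z * E ^ 2) := by
  intro I F A hA
  have hm' : (0 : ℝ) < m := (by positivity : 0 < y ^ 2).trans_le hym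
  have hm : 0 < m := by exact_mod_cast hm'
  have hρ0 : 0 ≤ ρ := nonneg_of_mul_nonneg_left ((by positivity : 0 ≤ n * Z ^ 2).trans hρ) hm'
  have hχ : 1 ≤ (1 - ρ)⁻¹ := (one_le_inv₀ (by linarith)).2 (by linarith)
  have hzZ : z ≤ Z := (le_mul_of_one_le_right (by positivity) hE1).trans hZ
  set s := #(positions I F)
  have hexposed : ∑ i ∈ I, ∑ ω ∈ A, componentSize ω i * total ω ^ j ≤
      N * (Z * (1 - ρ)⁻¹ ^ 2 * K * (z * E ^ 2) ^ s * #A) := by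
    refine (h.sum_sum_componentSize_mul_le hm hK hz hy.le hyN hE1 hE (le_trans (by gcongr) hρ)
      hρ1 hA).trans ?_
    gcongr
    exact (le_self_pow₀ hχ two_ne_zero).trans
      (le_mul_of_one_le_left (by positivity) (hz.trans hzZ))
  have hunexposed : ∑ i ∈ Iᶜ, ∑ ω ∈ A, componentSize ω i * total ω ^ j ≤
      N * (2 * (Z * (1 - ρ)⁻¹ ^ 2 * K * (z * E ^ 2) ^ s * #A)) :=
    calc ∑ i ∈ Iᶜ, ∑ ω ∈ A, componentSize ω i * total ω ^ j
        ≤ #Iᶜ * (2 * (z * E * (1 - ρ)⁻¹ ^ 2 * K * (z * E ^ 2) ^ s * #A)) := by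
          rw [← nsmul_eq_mul]
          exact Finset.sum_le_card_nsmul _ _ _ fun i hi =>
            h.sum_componentSize_mul_le_of_notMem hK hz hy hym hE1 hE (le_trans (by gcongr) hρ) hρ1
              hA (Finset.mem_compl.1 hi)
      _ ≤ N * (2 * (Z * (1 - ρ)⁻¹ ^ 2 * K * (z * E ^ 2) ^ s * #A)) := by
          gcongr
          exact card_finset_fin_le Iᶜ
  calc ∑ ω ∈ A, total ω ^ (j + 1)
      = ∑ i, ∑ ω ∈ A, componentSize ω i * total ω ^ j := by
        rw [Finset.sum_comm]
        exact Finset.sum_congr rfl fun ω _ => by rw [pow_succ', total, Finset.sum_mul]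
    _ = ∑ i ∈ I, ∑ ω ∈ A, componentSize ω i * total ω ^ j +
          ∑ i ∈ Iᶜ, ∑ ω ∈ A, componentSize ω i * total ω ^ j :=
        (Finset.sum_add_sum_compl I _).symm
    _ ≤ _ := add_le_add hexposed hunexposed
    _ = K * (3 * Z * (1 - ρ)⁻¹ ^ 2 * N) * (z * E ^ 2) ^ s * #A := by ring

theorem momentBound_pow {Z : ℝ} (hy : 0 < y) (hyN : y ^ 2 ≤ N) (hym : y ^ 2 ≤ m)
    (hρ : n * Z ^ 2 ≤ ρ * m) (hρ1 : ρ < 1) (hZ : (1 + 1 / y) ^ (2 * j) ≤ Z) :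
    MomentBound n m N j ((3 * Z * (1 - ρ)⁻¹ ^ 2 * N) ^ j) ((1 + 1 / y) ^ (2 * j)) := by
  have hE1 : 1 ≤ 1 + 1 / y := le_add_of_nonneg_right (by positivity)
  have hZ0 : 0 ≤ Z := (by positivity : 0 ≤ (1 + 1 / y) ^ (2 * j)).trans hZ
  have hE (k : ℕ) : k ≤ y * (1 + 1 / y) ^ k :=
    calc (k : ℝ) ≤ y * (1 + k * (1 / y)) := by field_simp; linarith
      _ ≤ y * (1 + 1 / y) ^ k := by
        gcongr
        exact one_add_mul_le_pow (by linarith) k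
  induction j with
  | zero => intro I F A _; simp
  | succ j ih =>
    have hstep : (1 + 1 / y) ^ (2 * j) * (1 + 1 / y) ≤ Z := by
      rw [← pow_succ]
      exact (pow_le_pow_right₀ hE1 (by lia)).trans hZ
    have hmono : (1 + 1 / y) ^ (2 * j) ≤ Z := (pow_le_pow_right₀ hE1 (by lia)).trans hZ
    rw [pow_succ, mul_add, mul_one, pow_add]
    exact (ih hmono).succ (by positivity) (one_le_pow₀ hE1) hy hyN hym hE1 hE hstep hρ hρ1

theorem cuckooPr2_lt_total_le {Z : ℝ} (hy : 0 < y) (hyN : y ^ 2 ≤ N) (hym : y ^ 2 ≤ m)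
    (hρ : n * Z ^ 2 ≤ ρ * m) (hρ1 : ρ < 1) (hZ : (1 + 1 / y) ^ (2 * j) ≤ Z) :
    cuckooPr2 n m N (fun ω => Real.exp 1 * (3 * Z * (1 - ρ)⁻¹ ^ 2) * N < total ω) ≤
      Real.exp (-j) := by
  have hm : 0 < m := by exact_mod_cast (by positivity : 0 < y ^ 2).trans_le hym
  have hN : (0 : ℝ) < N := (by positivity : 0 < y ^ 2).trans_le hyN
  have hZ0 : 0 < Z := (by positivity : 0 < (1 + 1 / y) ^ (2 * j)).trans_le hZ
  have : 0 < (1 - ρ)⁻¹ := inv_pos.2 (sub_pos.2 hρ1)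
  have : NeZero m := ⟨hm.ne'⟩
  set D := 3 * Z * (1 - ρ)⁻¹ ^ 2
  have : 0 < D := by positivity
  have hmoment : ∑ ω : Sample n m N, total ω ^ j ≤ (D * N) ^ j * Fintype.card (Sample n m N) := by
    have h := momentBound_pow hy hyN hym hρ hρ1 hZ ∅ ∅ Finset.univ fun _ _ _ _ => by simp
    rwa [card_positions, Finset.card_empty, Finset.card_empty, mul_zero, add_zero, pow_zero,
      mul_one, Finset.card_univ] at h
  have hmarkov := card_filter_lt_mul_pow_le_sum_pow (Ω := Sample n m N) total_nonneg
    (a := Real.exp 1 * D * N) (by positivity) j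
  rw [cuckooPr2, Nat.card_eq_fintype_card, Nat.card_eq_fintype_card, Fintype.card_subtype,
    div_le_iff₀ (by exact_mod_cast Fintype.card_pos), Real.exp_neg, ← div_eq_inv_mul,
    le_div_iff₀ (Real.exp_pos _)]
  refine le_of_mul_le_mul_left ?_ (by positivity : 0 < (D * N) ^ j)
  calc (D * N) ^ j * (#{ω : Sample n m N | Real.exp 1 * D * N < total ω} * Real.exp j)
      = #{ω : Sample n m N | Real.exp 1 * D * N < total ω} * (Real.exp 1 * D * N) ^ j := by
        rw [mul_assoc (Real.exp 1), mul_pow (Real.exp 1), Real.exp_one_pow]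
        ring
    _ ≤ (D * N) ^ j * Fintype.card (Sample n m N) := hmarkov.trans hmoment

end Moments

section Asymptotics

open Filter Real

theorem one_add_one_div_pow_le_exp {y δ : ℝ} {k : ℕ} (hy : 0 < y) (hk : k ≤ δ * y) :
    (1 + 1 / y) ^ k ≤ exp δ :=
  calc (1 + 1 / y) ^ k ≤ exp (1 / y) ^ k := by
        gcongr
        rw [add_comm]
        exact add_one_le_exp (1 / y)
    _ = exp (k / y) := by rw [← exp_nat_mul, mul_one_div]
    _ ≤ exp δ := exp_le_exp.2 ((div_le_iff₀ hy).2 hk)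

theorem eventually_le_log_and_log_pow_le (a : ℝ) (k : ℕ) :
    ∀ᶠ n : ℕ in atTop, a ≤ log n ∧ log n ^ k ≤ n := by
  have hlog := tendsto_log_atTop.eventually_ge_atTop a
  have hpow := (isLittleO_pow_log_id_atTop (n := k)).bound one_pos
  filter_upwards [tendsto_natCast_atTop_atTop.eventually (hlog.and hpow)] with n hn
  refine ⟨hn.1, (le_abs_self _).trans ?_⟩
  simpa using hn.2

theorem cuckooPr2_lt_total_le_exp_neg_floor_sq {δ L : ℝ} (hδ : 0 < δ) (hL : 0 < L)
    (hLδ : 2 / δ ≤ L) (hN : L ^ 6 ≤ N) (hm : L ^ 6 ≤ m) (hnm : exp (4 * δ) * n ≤ m) :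
    cuckooPr2 n m N
        (fun ω => exp 1 * (3 * exp δ * (1 - exp (-(2 * δ)))⁻¹ ^ 2) * N < total ω) ≤
      exp (-⌊L ^ 2⌋₊) := by
  have hratio : n * exp δ ^ 2 ≤ exp (-(2 * δ)) * m :=
    calc n * exp δ ^ 2 = exp (-(2 * δ)) * (exp (4 * δ) * n) := by
          rw [← exp_nat_mul, ← mul_assoc, ← exp_add, mul_comm]
          ring_nf
      _ ≤ exp (-(2 * δ)) * m := by gcongr
  have horder : (2 * ⌊L ^ 2⌋₊ : ℕ) ≤ δ * L ^ 3 := by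
    push_cast
    calc 2 * (⌊L ^ 2⌋₊ : ℝ) ≤ δ * L * L ^ 2 := by
          gcongr
          exacts [(div_le_iff₀' hδ).1 hLδ, Nat.floor_le (sq_nonneg L)]
      _ = δ * L ^ 3 := by ring
  exact cuckooPr2_lt_total_le (y := L ^ 3) (by positivity) (by rwa [← pow_mul])
    (by rwa [← pow_mul]) hratio (exp_lt_one_iff.2 (by linarith))
    (one_add_one_div_pow_le_exp (by positivity) horder)

theorem exp_neg_floor_log_sq_le {x : ℝ} (hx : 0 < x) (hlog : 2 ≤ log x) :
    exp (-⌊log x ^ 2⌋₊) ≤ x ^ (-(1 / 2 * log x)) := by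
  rw [rpow_def_of_pos hx, exp_le_exp]
  have hfloor := Nat.lt_floor_add_one (log x ^ 2)
  nlinarith

end Asymptotics

end Cuckoo

/-- Lemma: if `(1+ε)·n ≤ m`, `N > (log n)⁶`, and `v₁, …, v_N` are vertices chosen
independently and uniformly at random (with replacement), then
`Pr(∑_{i=1}^{N} C(v_i) > c·N) ≤ n^{−c'·log n}`, where the probability is over both the
vertices and the hash functions, and `c, c' > 0`, `n₀` depend only on `ε`. -/
theorem cuckoo_random_vertices_sum_bound (ε : ℝ) (hε : 0 < ε) :
    ∃ c c' : ℝ, 0 < c ∧ 0 < c' ∧ ∃ n₀ : ℕ, ∀ n m N : ℕ, n₀ ≤ n → (1 + ε) * n ≤ m →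
      Real.log n ^ 6 < (N : ℝ) →
      cuckooPr2 n m N (fun ω =>
          c * N < ∑ i : Fin N, (cuckooC n m ω.1.1 ω.1.2 (ω.2 i) : ℝ))
        ≤ (n : ℝ) ^ (-(c' * Real.log n)) := by
  set δ := Real.log (1 + ε) / 4 with hδ_def
  have hδ : 0 < δ := div_pos (Real.log_pos (by linarith)) four_pos
  have hδε : Real.exp (4 * δ) = 1 + ε := by
    rw [hδ_def, mul_div_cancel₀ _ four_ne_zero, Real.exp_log (by linarith)]
  have hχ : 0 < (1 - Real.exp (-(2 * δ)))⁻¹ :=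
    inv_pos.2 (sub_pos.2 (Real.exp_lt_one_iff.2 (by linarith)))
  obtain ⟨n₀, hn₀⟩ := Filter.eventually_atTop.1
    (Cuckoo.eventually_le_log_and_log_pow_le (max 2 (2 / δ)) 6)
  refine ⟨Real.exp 1 * (3 * Real.exp δ * (1 - Real.exp (-(2 * δ)))⁻¹ ^ 2), 1 / 2, by positivity,
    one_half_pos, n₀, fun n m N hn hm hN => ?_⟩
  obtain ⟨hlog, hpow⟩ := hn₀ n hn
  obtain ⟨hlog_two, hlog_δ⟩ := max_le_iff.1 hlog
  have hn_pos : (0 : ℝ) < n := (by positivity : 0 < Real.log n ^ 6).trans_le hpow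
  calc _ ≤ Real.exp (-⌊Real.log n ^ 2⌋₊) :=
        Cuckoo.cuckooPr2_lt_total_le_exp_neg_floor_sq hδ (by linarith) hlog_δ hN.le
          (by nlinarith) (hδε ▸ hm)
    _ ≤ _ := Cuckoo.exp_neg_floor_log_sq_le hn_pos hlog_two
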